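/- Morse Lemma: Let f : ℝⁿ → ℝ be a C^∞ function and let p be a nondegenerate critical point of f of index k, i.e., Df_p = 0, and there is a direct sum decomposition ℝⁿ = V₋ ⊕ V₊ with dim V₋ = k, dim V₊ = n − k, such that the Hessian D²f_p is negative definite on V₋ and positive definite on V₊. Then there exist open neighborhoods U of p and V of 0 in ℝⁿ and a C^∞ diffeomorphism φ : U → V with φ(p) = 0 and C^∞ inverse, such that for all x = (x₁, …, xₙ) ∈ V one has f(φ⁻¹(x)) = f(p) − x₁² − ⋯ − x_k² + x_{k+1}² + ⋯ + xₙ². -/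

import Mathlib

/-!
With `H x = ∫₀¹ 2 (1 - t) D²f(p + t x) dt`, Taylor's formula at the critical point `p` reads
`f (p + x) = f p + ½ H x (x, x)`, where `H x` is a symmetric form depending smoothly on `x` and
`H 0 = D²f_p`. The operator `(H 0)⁻¹ ∘ H x` is self-adjoint for the form `H 0` and close to `1`, so
it has a unique square root `R x` near `1`. By uniqueness `R x` is again self-adjoint, whence
`H x (u, v) = H 0 (R x u, R x v)`. By the inverse function theorem `x ↦ R x x`, whose derivative at
`0` is the identity, is a local diffeomorphism, and it turns `f` into `f p + ½ D²f_p`. Sylvester's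
law of inertia diagonalizes the remaining constant form (Palais' argument).
-/

open Set Topology

theorem exists_nhds_norm_le_of_continuous {X Y G : Type*} [TopologicalSpace X]
    [TopologicalSpace Y] [SeminormedAddCommGroup G] {g : X × Y → G} (hg : Continuous g)
    {K : Set Y} (hK : IsCompact K) (x₀ : X) :
    ∃ s ∈ 𝓝 x₀, ∃ C, ∀ x ∈ s, ∀ y ∈ K, ‖g (x, y)‖ ≤ C := by
  obtain ⟨W, hKW, hW, hbdd⟩ :=
    Metric.exists_isOpen_isBounded_image_of_isCompact_of_forall_continuousAt
      (isCompact_singleton.prod hK) fun q (_ : q ∈ {x₀} ×ˢ K) => hg.continuousAt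
  obtain ⟨s, t, hs, -, hxs, hKt, hst⟩ := generalized_tube_lemma isCompact_singleton hK hW hKW
  obtain ⟨C, hC⟩ := hbdd.exists_norm_le
  exact ⟨s, hs.mem_nhds (hxs rfl), C, fun x hx y hy =>
    hC _ (mem_image_of_mem g (hst ⟨hx, hKt hy⟩))⟩

section ParametricIntegral

universe u

variable {E F : Type u} [NormedAddCommGroup E] [NormedSpace ℝ E]
  [NormedAddCommGroup F] [NormedSpace ℝ F]

theorem hasFDerivAt_intervalIntegral_of_contDiff {g : E × ℝ → F} (hg : ContDiff ℝ 1 g)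
    (a b : ℝ) (x₀ : E) :
    HasFDerivAt (fun x => ∫ t in a..b, g (x, t))
      (∫ t in a..b, fderiv ℝ g (x₀, t) ∘L .inl ℝ E ℝ) x₀ := by
  have hg' : Continuous fun q => fderiv ℝ g q ∘L .inl ℝ E ℝ :=
    (hg.continuous_fderiv one_ne_zero).clm_comp continuous_const
  obtain ⟨s, hs, C, hC⟩ :=
    exists_nhds_norm_le_of_continuous hg' (isCompact_uIcc (a := a) (b := b)) x₀
  refine intervalIntegral.hasFDerivAt_integral_of_dominated_of_fderiv_le (𝕜 := ℝ)
    (F := fun x t => g (x, t)) (F' := fun x t => fderiv ℝ g (x, t) ∘L .inl ℝ E ℝ)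
    (bound := fun _ => C) hs
    (.of_forall fun x => (hg.continuous.comp (.prodMk_right x)).aestronglyMeasurable)
    ((hg.continuous.comp (.prodMk_right x₀)).intervalIntegrable a b)
    (hg'.comp (.prodMk_right x₀)).aestronglyMeasurable
    (.of_forall fun t ht x hx => hC x hx t (uIoc_subset_uIcc ht))
    intervalIntegrable_const
    (.of_forall fun t _ x _ => ?_)
  exact (hg.differentiable one_ne_zero (x, t)).hasFDerivAt.comp x (hasFDerivAt_prodMk_left x t)

theorem contDiff_intervalIntegral {n : ℕ∞} {g : E × ℝ → F} (hg : ContDiff ℝ n g) (a b : ℝ) :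
    ContDiff ℝ n fun x => ∫ t in a..b, g (x, t) := by
  suffices h : ∀ m : ℕ, ∀ {F : Type u} [NormedAddCommGroup F] [NormedSpace ℝ F] {g : E × ℝ → F},
      ContDiff ℝ m g → ContDiff ℝ m fun x => ∫ t in a..b, g (x, t) from
    contDiff_iff_forall_nat_le.2 fun m hm => h m (hg.of_le (mod_cast hm))
  intro m
  induction m with
  | zero =>
    intro F _ _ g hg
    simp only [Nat.cast_zero, contDiff_zero] at hg ⊢
    exact intervalIntegral.continuous_parametric_intervalIntegral_of_continuous'
      (f := fun x t => g (x, t)) hg a b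
  | succ m ih =>
    intro F _ _ g hg
    rw [Nat.cast_succ] at hg ⊢
    exact contDiff_succ_iff_hasFDerivAt.2 ⟨_,
      ih ((hg.fderiv_right le_rfl).clm_comp contDiff_const),
      hasFDerivAt_intervalIntegral_of_contDiff (hg.of_le le_add_self) a b⟩

end ParametricIntegral

section AveragedHessian

variable {E : Type*} [NormedAddCommGroup E] [NormedSpace ℝ E] {n : ℕ∞} {f : E → ℝ}

/-- The weighted average of the Hessians `D²f` along the segment from `p` to `p + x`, whose value
at `(x, x)` is twice the remainder of the first-order Taylor expansion of `f` at `p`. The weight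
`2 (1 - t)` has total mass one. -/
noncomputable def averagedHessian (f : E → ℝ) (p x : E) : E →L[ℝ] E →L[ℝ] ℝ :=
  ∫ t in (0 : ℝ)..1, (2 * (1 - t)) • fderiv ℝ (fderiv ℝ f) (p + t • x)

theorem contDiff_fderiv_fderiv (hf : ContDiff ℝ (n + 2) f) :
    ContDiff ℝ n (fderiv ℝ (fderiv ℝ f)) :=
  (hf.fderiv_right (m := n + 1) (by rw [add_assoc, one_add_one_eq_two])).fderiv_right le_rfl

set_option maxSynthPendingDepth 3 in
theorem contDiff_averagedHessian (hf : ContDiff ℝ (n + 2) f) (p : E) :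
    ContDiff ℝ n (averagedHessian f p) := by
  have hweight : ContDiff ℝ n fun q : E × ℝ => 2 * (1 - q.2) := by fun_prop
  have hsegment : ContDiff ℝ n fun q : E × ℝ => p + q.2 • q.1 := by fun_prop
  exact contDiff_intervalIntegral (hweight.smul ((contDiff_fderiv_fderiv hf).comp hsegment)) 0 1

theorem averagedHessian_apply (hf : ContDiff ℝ 2 f) (p x u v : E) :
    averagedHessian f p x u v =
      ∫ t in (0 : ℝ)..1, 2 * (1 - t) * fderiv ℝ (fderiv ℝ f) (p + t • x) u v := by
  have hcont : Continuous fun t : ℝ => (2 * (1 - t)) • fderiv ℝ (fderiv ℝ f) (p + t • x) := by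
    have := (contDiff_fderiv_fderiv (n := 0) (by simpa using hf)).continuous
    fun_prop
  rw [averagedHessian, ContinuousLinearMap.intervalIntegral_apply (hcont.intervalIntegrable 0 1),
    ContinuousLinearMap.intervalIntegral_apply
      ((hcont.clm_apply continuous_const).intervalIntegrable 0 1)]
  rfl

theorem isSymmSndFDerivAt_of_contDiff (hf : ContDiff ℝ 2 f) (p : E) : IsSymmSndFDerivAt ℝ f p :=
  hf.contDiffAt.isSymmSndFDerivAt (by rw [minSmoothness_of_isRCLikeNormedField])

theorem averagedHessian_comm (hf : ContDiff ℝ 2 f) (p x u v : E) :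
    averagedHessian f p x u v = averagedHessian f p x v u := by
  simp only [averagedHessian_apply hf, (isSymmSndFDerivAt_of_contDiff hf _).eq u v]

set_option maxSynthPendingDepth 3 in
theorem averagedHessian_zero (f : E → ℝ) (p : E) :
    averagedHessian f p 0 = fderiv ℝ (fderiv ℝ f) p := by
  have hmass : ∫ t in (0 : ℝ)..1, 2 * (1 - t) = 1 := by
    rw [intervalIntegral.integral_const_mul, intervalIntegral.integral_comp_sub_left (fun t => t)]
    norm_num
  simp only [averagedHessian, smul_zero, add_zero]
  rw [intervalIntegral.integral_smul_const, hmass, one_smul]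

theorem map_add_eq_add_averagedHessian (hf : ContDiff ℝ 2 f) (p x : E) :
    f (p + x) = f p + fderiv ℝ f p x + 1 / 2 * averagedHessian f p x x x := by
  have htaylor := map_add_eq_sum_add_integral_iteratedFDeriv (n := 1) (f := f) (x := p) (y := x)
    fun t _ => by simpa [one_add_one_eq_two] using hf.contDiffAt
  simp only [averagedHessian_apply hf, mul_assoc, intervalIntegral.integral_const_mul]
  simpa [Finset.sum_range_succ, iteratedFDeriv_two_apply] using htaylor

end AveragedHessian

section InverseFunction

variable {𝕜 E F A : Type*} [RCLike 𝕜] [NormedAddCommGroup E] [NormedSpace 𝕜 E] [CompleteSpace E]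
  [NormedAddCommGroup F] [NormedSpace 𝕜 F] [NormedRing A] [NormedAlgebra 𝕜 A] [CompleteSpace A]

theorem exists_openPartialHomeomorph_contDiffOn_symm {n : WithTop ℕ∞} (hn : n ≠ 0) {g : E → F}
    {U : Set E} (hU : IsOpen U) (hg : ContDiffOn 𝕜 n g U) {a : E} (ha : a ∈ U) {g' : E ≃L[𝕜] F}
    (hg' : HasFDerivAt g (g' : E →L[𝕜] F) a) :
    ∃ e : OpenPartialHomeomorph E F, ⇑e = g ∧ a ∈ e.source ∧ e.source ⊆ U ∧
      ContDiffOn 𝕜 n e.symm e.target := by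
  have hgU : ∀ x ∈ U, ContDiffAt 𝕜 n g x := fun x hx => hg.contDiffAt (hU.mem_nhds hx)
  have hW : IsOpen (U ∩ fderiv 𝕜 g ⁻¹' range ((↑) : (E ≃L[𝕜] F) → E →L[𝕜] F)) :=
    (hg.continuousOn_fderiv_of_isOpen hU
      (ENat.one_le_iff_ne_zero_withTop.2 hn)).isOpen_inter_preimage hU ContinuousLinearEquiv.isOpen
  let e := ((hgU a ha).toOpenPartialHomeomorph g hg' hn).restrOpen _ hW
  have he : ⇑e = g := rfl
  have hsource : e.source ⊆ U ∩ fderiv 𝕜 g ⁻¹' range ((↑) : (E ≃L[𝕜] F) → E →L[𝕜] F) :=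
    fun x hx => hx.2
  refine ⟨e, he, ⟨(hgU a ha).mem_toOpenPartialHomeomorph_source hg' hn, ha, g', hg'.fderiv.symm⟩,
    fun x hx => (hsource hx).1, fun y hy => ?_⟩
  obtain ⟨hxU, g₁', hg₁'⟩ := hsource (e.map_target hy)
  have hderiv : HasFDerivAt e (g₁' : E →L[𝕜] F) (e.symm y) := by
    rw [he, hg₁']
    exact ((hgU _ hxU).differentiableAt hn).hasFDerivAt
  exact (e.contDiffAt_symm hy hderiv (hgU _ hxU)).contDiffWithinAt

variable (𝕜 A) in
theorem exists_openPartialHomeomorph_sq {n : WithTop ℕ∞} (hn : n ≠ 0) :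
    ∃ e : OpenPartialHomeomorph A A, (∀ a, e a = a * a) ∧ 1 ∈ e.source ∧
      ContDiffOn 𝕜 n e.symm e.target := by
  have hderiv : HasFDerivAt (fun a : A => a * a)
      ((ContinuousLinearEquiv.smulLeft (Units.mk0 (2 : 𝕜) two_ne_zero) : A ≃L[𝕜] A) : A →L[𝕜] A)
      1 := by
    refine ((hasFDerivAt_id (𝕜 := 𝕜) (1 : A)).mul' (hasFDerivAt_id 1)).congr_fderiv ?_
    ext a
    simp [two_smul, Units.smul_def]
  obtain ⟨e, he, h1, -, hsymm⟩ := exists_openPartialHomeomorph_contDiffOn_symm hn isOpen_univ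
    (contDiff_id.mul contDiff_id).contDiffOn (mem_univ 1) hderiv
  exact ⟨e, congrFun he, h1, hsymm⟩

end InverseFunction

section FormCongruence

variable {𝕜 E : Type*} [RCLike 𝕜] [NormedAddCommGroup E] [NormedSpace 𝕜 E]

/-- The adjoint of an operator `T` with respect to the nondegenerate bilinear form `b`, i.e. the
operator `T†` with `b (T† u) v = b u (T v)`. Nondegeneracy of `b` is encoded by taking it to be an
isomorphism onto the dual space. -/
noncomputable def formAdjoint (b : E ≃L[𝕜] (E →L[𝕜] 𝕜)) (T : E →L[𝕜] E) : E →L[𝕜] E :=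
  (b.symm : (E →L[𝕜] 𝕜) →L[𝕜] E) ∘L (ContinuousLinearMap.compL 𝕜 E E 𝕜).flip T ∘L
    (b : E →L[𝕜] (E →L[𝕜] 𝕜))

variable (b : E ≃L[𝕜] (E →L[𝕜] 𝕜))

theorem apply_formAdjoint (T : E →L[𝕜] E) (u v : E) : b (formAdjoint b T u) v = b u (T v) := by
  simp [formAdjoint]

theorem formAdjoint_eq_iff {S T : E →L[𝕜] E} :
    formAdjoint b S = T ↔ ∀ u v, b (T u) v = b u (S v) := by
  refine ⟨?_, fun h => ?_⟩
  · rintro rfl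
    exact apply_formAdjoint b S
  · ext u
    refine b.injective (ContinuousLinearMap.ext fun v => ?_)
    rw [apply_formAdjoint, h]

theorem continuous_formAdjoint : Continuous (formAdjoint b) := by
  unfold formAdjoint
  fun_prop

theorem formAdjoint_one : formAdjoint b 1 = 1 :=
  (formAdjoint_eq_iff b).2 fun _ _ => rfl

theorem formAdjoint_mul (S T : E →L[𝕜] E) :
    formAdjoint b (S * T) = formAdjoint b T * formAdjoint b S :=
  (formAdjoint_eq_iff b).2 fun u v => by simp [apply_formAdjoint]

theorem formAdjoint_symm_comp {c : E →L[𝕜] E →L[𝕜] 𝕜} (hb : ∀ u v, b u v = b v u)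
    (hc : ∀ u v, c u v = c v u) :
    formAdjoint b ((b.symm : (E →L[𝕜] 𝕜) →L[𝕜] E) ∘L c) =
      (b.symm : (E →L[𝕜] 𝕜) →L[𝕜] E) ∘L c := by
  have hbc : ∀ u v, b (b.symm (c u)) v = c u v := fun u v => by rw [b.apply_symm_apply]
  refine (formAdjoint_eq_iff b).2 fun u v => ?_
  calc b (b.symm (c u)) v = c v u := by rw [hbc, hc]
    _ = b u (b.symm (c v)) := by rw [hb, hbc]

theorem exists_contDiffOn_congruence [CompleteSpace E] {n : WithTop ℕ∞} (hn : n ≠ 0)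
    (hb : ∀ u v, b u v = b v u) :
    ∃ (U : Set (E →L[𝕜] E →L[𝕜] 𝕜)) (R : (E →L[𝕜] E →L[𝕜] 𝕜) → E →L[𝕜] E),
      IsOpen U ∧ (b : E →L[𝕜] E →L[𝕜] 𝕜) ∈ U ∧ ContDiffOn 𝕜 n R U ∧
      R b = 1 ∧ ∀ c ∈ U, (∀ u v, c u v = c v u) → ∀ u v, c u v = b (R c u) (R c v) := by
  obtain ⟨sq, hsq, h1source, hsqrt⟩ := exists_openPartialHomeomorph_sq 𝕜 (E →L[𝕜] E) hn
  let A : (E →L[𝕜] E →L[𝕜] 𝕜) → E →L[𝕜] E := fun c => (b.symm : (E →L[𝕜] 𝕜) →L[𝕜] E) ∘L c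
  let R : (E →L[𝕜] E →L[𝕜] 𝕜) → E →L[𝕜] E := fun c => sq.symm (A c)
  have hA : ContDiff 𝕜 n A := contDiff_const.clm_comp contDiff_id
  have hAb : A b = 1 := ContinuousLinearMap.ext b.symm_apply_apply
  have hsq1 : sq 1 = 1 := by rw [hsq, one_mul]
  have hR : ContDiffOn 𝕜 n R (A ⁻¹' sq.target) := hsqrt.comp hA.contDiffOn fun _ hc => hc
  have hRb : R b = 1 := by simpa only [R, hAb, hsq1] using sq.left_inv h1source
  have hRA : ∀ c ∈ A ⁻¹' sq.target, R c * R c = A c := fun c hc => by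
    rw [← hsq, sq.right_inv hc]
  refine ⟨A ⁻¹' sq.target ∩ (fun c => formAdjoint b (R c)) ⁻¹' sq.source, R,
    ((continuous_formAdjoint b).comp_continuousOn hR.continuousOn).isOpen_inter_preimage
      (sq.open_target.preimage hA.continuous) sq.open_source, ⟨?_, ?_⟩,
    hR.mono inter_subset_left, hRb, ?_⟩
  · simpa only [mem_preimage, hAb, hsq1] using sq.map_source h1source
  · simpa only [mem_preimage, hRb, formAdjoint_one] using h1source
  · rintro c ⟨hct, hcs⟩ hc u v
    have hself : formAdjoint b (R c) = R c := sq.injOn hcs (sq.map_target hct) <| by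
      rw [hsq, hsq, ← formAdjoint_mul, hRA c hct, formAdjoint_symm_comp b hb hc]
    calc c u v = b (A c u) v := by simp [A]
      _ = b (formAdjoint b (R c) (R c u)) v := by rw [hself, ← hRA c hct]; rfl
      _ = b (R c u) (R c v) := apply_formAdjoint b ..

end FormCongruence

section MorsePalais

variable {E : Type*} [NormedAddCommGroup E] [NormedSpace ℝ E]

/-- The quadratic term `v ↦ ½ D²f_p(v, v)` of the Taylor expansion of `f` at `p`, as a quadratic
form. -/
noncomputable def quadraticPart (f : E → ℝ) (p : E) : QuadraticForm ℝ E :=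
  ((1 / 2 : ℝ) • (fderiv ℝ (fderiv ℝ f) p).toBilinForm).toQuadraticMap

theorem quadraticPart_apply (f : E → ℝ) (p v : E) :
    quadraticPart f p v = 1 / 2 * fderiv ℝ (fderiv ℝ f) p v v := rfl

theorem isInvertible_fderiv_fderiv_of_radical_eq_bot [FiniteDimensional ℝ E] {f : E → ℝ}
    (hf : ContDiff ℝ 2 f) {p : E} (hrad : (quadraticPart f p).radical = ⊥) :
    (fderiv ℝ (fderiv ℝ f) p).IsInvertible := by
  have hinj : Function.Injective (fderiv ℝ (fderiv ℝ f) p).toLinearMap := by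
    refine (injective_iff_map_eq_zero _).2 fun v hv => ?_
    change fderiv ℝ (fderiv ℝ f) p v = 0 at hv
    have hv' : ∀ w, fderiv ℝ (fderiv ℝ f) p w v = 0 := fun w => by
      rw [(isSymmSndFDerivAt_of_contDiff hf p).eq w v, hv]
      rfl
    have hmem : v ∈ (quadraticPart f p).radical :=
      QuadraticMap.mem_radical_iff'.2 (by simp [quadraticPart_apply, hv, hv'])
    rwa [hrad] at hmem
  have hrank : Module.finrank ℝ E = Module.finrank ℝ (E →L[ℝ] ℝ) :=
    Subspace.dual_finrank_eq.symm.trans LinearMap.toContinuousLinearMap.finrank_eq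
  exact ⟨(LinearEquiv.ofInjectiveOfFinrankEq _ hinj hrank).toContinuousLinearEquiv, rfl⟩

theorem exists_morsePalais_chart [CompleteSpace E] {n : ℕ∞} (hn : n ≠ 0) {f : E → ℝ}
    (hf : ContDiff ℝ (n + 2) f) {p : E} (hcrit : fderiv ℝ f p = 0)
    (hnondeg : (fderiv ℝ (fderiv ℝ f) p).IsInvertible) :
    ∃ e : OpenPartialHomeomorph E E, p ∈ e.source ∧ e p = 0 ∧ ContDiffOn ℝ n e e.source ∧
      ContDiffOn ℝ n e.symm e.target ∧
      ∀ x ∈ e.source, f x = f p + quadraticPart f p (e x) := by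
  have hn' : (n : WithTop ℕ∞) ≠ 0 := mod_cast hn
  have hf2 : ContDiff ℝ 2 f := hf.of_le le_add_self
  obtain ⟨b, hb⟩ := hnondeg
  have hbsymm : ∀ u v, b u v = b v u := fun u v => by
    have := (isSymmSndFDerivAt_of_contDiff hf2 p).eq u v
    rwa [← hb] at this
  obtain ⟨U, R, hU, hbU, hR, hRb, hcongr⟩ := exists_contDiffOn_congruence b hn' hbsymm
  let H : E → E →L[ℝ] E →L[ℝ] ℝ := fun x => averagedHessian f p (x - p)
  have hH : ContDiff ℝ n H := (contDiff_averagedHessian hf p).comp (by fun_prop)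
  have hHp : H p = b := by simp only [H, sub_self, averagedHessian_zero, hb]
  have hpU : p ∈ H ⁻¹' U := by rwa [mem_preimage, hHp]
  have hRH : ContDiffOn ℝ n (fun x => R (H x)) (H ⁻¹' U) :=
    hR.comp hH.contDiffOn fun _ hx => hx
  have hg : ContDiffOn ℝ n (fun x => R (H x) (x - p)) (H ⁻¹' U) := hRH.clm_apply (by fun_prop)
  have hUopen : IsOpen (H ⁻¹' U) := hU.preimage hH.continuous
  have hg' : HasFDerivAt (fun x => R (H x) (x - p))
      (ContinuousLinearEquiv.refl ℝ E : E →L[ℝ] E) p := by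
    have hRHp := ((hRH.contDiffAt (hUopen.mem_nhds hpU)).differentiableAt hn').hasFDerivAt
    refine (hRHp.clm_apply ((hasFDerivAt_id p).sub_const p)).congr_fderiv ?_
    ext v
    simp [hHp, hRb]
  obtain ⟨e, he, hpe, heU, hesymm⟩ :=
    exists_openPartialHomeomorph_contDiffOn_symm hn' hUopen hg hpU hg'
  refine ⟨e, hpe, by simp [he], he ▸ hg.mono heU, hesymm, fun x hx => ?_⟩
  calc f x = f p + 1 / 2 * H x (x - p) (x - p) := by
        simpa [hcrit] using map_add_eq_add_averagedHessian hf2 p (x - p)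
    _ = f p + quadraticPart f p (e x) := by
        rw [quadraticPart_apply, hcongr _ (heU hx) (averagedHessian_comm hf2 p _), he, ← hb]
        rfl

end MorsePalais

section Sylvester

open Module QuadraticMap

variable {M : Type*} [AddCommGroup M] [Module ℝ M] [FiniteDimensional ℝ M] {Q : QuadraticForm ℝ M}
  {Vneg Vpos : Submodule ℝ M}

theorem sigNeg_eq_finrank_of_isCompl (hcompl : IsCompl Vneg Vpos)
    (hneg : ((-Q).restrict Vneg).PosDef) (hpos : (Q.restrict Vpos).PosDef) :
    sigNeg Q = finrank ℝ Vneg := by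
  have := le_sigNeg_of_negDef Q hneg
  have := le_sigPos_of_posDef Q hpos
  have := Submodule.finrank_add_eq_of_isCompl hcompl
  have := QuadraticForm.sigPos_add_sigNeg_add_radical (Q := Q)
  omega

theorem radical_eq_bot_of_isCompl (hcompl : IsCompl Vneg Vpos)
    (hneg : ((-Q).restrict Vneg).PosDef) (hpos : (Q.restrict Vpos).PosDef) :
    Q.radical = ⊥ := by
  have := le_sigNeg_of_negDef Q hneg
  have := le_sigPos_of_posDef Q hpos
  have := Submodule.finrank_add_eq_of_isCompl hcompl
  have := QuadraticForm.sigPos_add_sigNeg_add_radical (Q := Q)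
  exact Submodule.finrank_eq_zero.1 (by omega)

theorem equivalent_weightedSumSquares_comp_equiv {ι ι' R : Type*} [Fintype ι] [Fintype ι']
    [CommRing R] (s : ι ≃ ι') (w : ι' → R) :
    (weightedSumSquares R w).Equivalent (weightedSumSquares R (w ∘ s)) :=
  ⟨{ LinearEquiv.funCongrLeft R R s with
      map_app' := fun x => by
        simpa [weightedSumSquares_apply, LinearEquiv.funCongrLeft_apply] using
          s.sum_comp fun i => w i * (x i * x i) }⟩

/-- The standard quadratic form `-x₁² - ⋯ - x_k² + x_{k+1}² + ⋯ + x_n²` of index `k` on `ℝⁿ`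
(negative definite if `n ≤ k`). -/
noncomputable def standardForm (n k : ℕ) : QuadraticForm ℝ (Fin n → ℝ) :=
  weightedSumSquares ℝ fun i => if (i : ℕ) < k then (-1 : ℝ) else 1

theorem standardForm_apply (n k : ℕ) (x : Fin n → ℝ) :
    standardForm n k x = ∑ i : Fin n, if (i : ℕ) < k then -(x i ^ 2) else x i ^ 2 := by
  simp only [standardForm, weightedSumSquares_apply, smul_eq_mul, ite_mul, neg_mul, one_mul,
    pow_two]

theorem equivalent_standardForm_of_sign_weights {n : ℕ} {w : Fin n → ℝ}
    (hw : ∀ i, w i = -1 ∨ w i = 1) :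
    (weightedSumSquares ℝ w).Equivalent (standardForm n {i | w i < 0}.ncard) := by
  classical
  have hcard : Fintype.card {i : Fin n // (i : ℕ) < {i | w i < 0}.ncard} =
      Fintype.card {i // w i < 0} := by
    have hle : {i | w i < 0}.ncard ≤ n := by
      simpa using Set.ncard_le_card {i | w i < 0}
    rw [Fintype.card_subtype, Fin.card_filter_val_lt, min_eq_right hle, ← Nat.card_coe_set_eq,
      Nat.card_eq_fintype_card]
    rfl
  let s : Equiv.Perm (Fin n) := (Fintype.equivOfCardEq hcard).extendSubtype
  have hs : w ∘ s = fun i : Fin n => if (i : ℕ) < {i | w i < 0}.ncard then (-1 : ℝ) else 1 := by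
    funext i
    split_ifs with hi
    · have : w (s i) < 0 := (Fintype.equivOfCardEq hcard).extendSubtype_mem i hi
      exact (hw (s i)).resolve_right (by linarith)
    · have : ¬ w (s i) < 0 := (Fintype.equivOfCardEq hcard).extendSubtype_not_mem i hi
      exact (hw (s i)).resolve_left (by linarith)
  rw [standardForm, ← hs]
  exact equivalent_weightedSumSquares_comp_equiv s w

theorem equivalent_standardForm (hrad : Q.radical = ⊥) :
    Q.Equivalent (standardForm (finrank ℝ M) (sigNeg Q)) := by
  have hsep : (associated (R := ℝ) Q).SeparatingLeft := by
    rw [LinearMap.separatingLeft_iff_ker_eq_bot, ← radical_eq_ker_associated, hrad]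
  obtain ⟨w, hw, hQw⟩ := Q.equivalent_one_neg_one_weighted_sum_squared hsep
  rw [QuadraticForm.sigNeg_of_equiv_weightedSumSquares hQw]
  exact hQw.trans (equivalent_standardForm_of_sign_weights hw)

end Sylvester

theorem morse_lemma_general {E : Type*} [NormedAddCommGroup E] [NormedSpace ℝ E]
    [FiniteDimensional ℝ E] {n k : ℕ} (hdim : Module.finrank ℝ E = n) {r : ℕ∞} (hr : r ≠ 0)
    {f : E → ℝ} (hf : ContDiff ℝ (r + 2) f) {p : E} (hcrit : fderiv ℝ f p = 0)
    {Vneg Vpos : Submodule ℝ E} (hcompl : IsCompl Vneg Vpos) (hdimneg : Module.finrank ℝ Vneg = k)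
    (hneg : ∀ v ∈ Vneg, v ≠ 0 → fderiv ℝ (fderiv ℝ f) p v v < 0)
    (hpos : ∀ v ∈ Vpos, v ≠ 0 → 0 < fderiv ℝ (fderiv ℝ f) p v v) :
    ∃ e : OpenPartialHomeomorph E (Fin n → ℝ), p ∈ e.source ∧ e p = 0 ∧
      ContDiffOn ℝ r e e.source ∧ ContDiffOn ℝ r e.symm e.target ∧
      ∀ y ∈ e.target, f (e.symm y) =
        f p + ∑ i : Fin n, if (i : ℕ) < k then -(y i ^ 2) else y i ^ 2 := by
  subst hdim hdimneg
  have := FiniteDimensional.complete ℝ E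
  have hneg' : ((-quadraticPart f p).restrict Vneg).PosDef := fun v hv => by
    change 0 < -(1 / 2 * fderiv ℝ (fderiv ℝ f) p v v)
    linarith [hneg v v.2 (by simpa using hv)]
  have hpos' : ((quadraticPart f p).restrict Vpos).PosDef := fun v hv => by
    change 0 < 1 / 2 * fderiv ℝ (fderiv ℝ f) p v v
    linarith [hpos v v.2 (by simpa using hv)]
  have hrad := radical_eq_bot_of_isCompl hcompl hneg' hpos'
  obtain ⟨e, hpe, hep, he, hesymm, hfe⟩ := exists_morsePalais_chart hr hf hcrit
    (isInvertible_fderiv_fderiv_of_radical_eq_bot (hf.of_le le_add_self) hrad)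
  obtain ⟨L⟩ := equivalent_standardForm hrad
  rw [sigNeg_eq_finrank_of_isCompl hcompl hneg' hpos'] at L
  let L' := L.toLinearEquiv.toContinuousLinearEquiv
  refine ⟨e.transHomeomorph L'.toHomeomorph, hpe, by simp [hep], L'.contDiff.comp_contDiffOn he,
    hesymm.comp L'.symm.contDiff.contDiffOn fun _ hy => hy, fun y hy => ?_⟩
  have hLy : L (e (e.symm (L'.symm y))) = y := by
    rw [e.right_inv (x := L'.symm y) hy]
    exact L'.apply_symm_apply y
  calc f (e.symm (L'.symm y)) = f p + quadraticPart f p (e (e.symm (L'.symm y))) :=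
        hfe _ (e.map_target hy)
    _ = f p + standardForm _ _ y := by rw [← L.map_app, hLy]
    _ = _ := by rw [standardForm_apply]

/-- **Morse Lemma.** If `p` is a nondegenerate critical point of index `k` of a smooth
function `f : ℝⁿ → ℝ` (the Hessian is negative definite on a `k`-dimensional subspace
`V₋` and positive definite on a complementary `(n-k)`-dimensional subspace `V₊`), then
there are neighborhoods `U` of `p` and `V` of `0` and a smooth diffeomorphism
`φ : U → V` with smooth inverse `ψ` and `φ p = 0` such that
`f(ψ x) = f(p) - x₁² - ⋯ - x_k² + x_{k+1}² + ⋯ + xₙ²` on `V`. -/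
theorem morse_lemma
    {n k : ℕ} (f : (Fin n → ℝ) → ℝ) (hf : ContDiff ℝ (⊤ : ℕ∞) f)
    (p : Fin n → ℝ) (hcrit : fderiv ℝ f p = 0)
    (Vneg Vpos : Submodule ℝ (Fin n → ℝ))
    (hcompl : IsCompl Vneg Vpos)
    (hdimneg : Module.finrank ℝ Vneg = k)
    (hdimpos : Module.finrank ℝ Vpos = n - k)
    (hneg : ∀ v ∈ Vneg, v ≠ 0 → fderiv ℝ (fderiv ℝ f) p v v < 0)
    (hpos : ∀ v ∈ Vpos, v ≠ 0 → 0 < fderiv ℝ (fderiv ℝ f) p v v) :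
    ∃ (U V : Set (Fin n → ℝ)) (φ ψ : (Fin n → ℝ) → (Fin n → ℝ)),
      IsOpen U ∧ IsOpen V ∧ p ∈ U ∧ (0 : Fin n → ℝ) ∈ V ∧
      ContDiffOn ℝ (⊤ : ℕ∞) φ U ∧ ContDiffOn ℝ (⊤ : ℕ∞) ψ V ∧
      Set.MapsTo φ U V ∧ Set.MapsTo ψ V U ∧
      (∀ x ∈ U, ψ (φ x) = x) ∧ (∀ y ∈ V, φ (ψ y) = y) ∧
      φ p = 0 ∧
      (∀ x ∈ V, f (ψ x) =
        f p + ∑ i : Fin n, (if (i : ℕ) < k then -(x i ^ 2) else x i ^ 2)) := by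
  obtain ⟨e, hpe, hep, he, hesymm, hfe⟩ := morse_lemma_general (Module.finrank_fin_fun ℝ)
    ENat.top_ne_zero hf hcrit hcompl hdimneg hneg hpos
  exact ⟨e.source, e.target, e, e.symm, e.open_source, e.open_target, hpe, hep ▸ e.map_source hpe,
    he, hesymm, e.mapsTo, e.mapsTo_symm, fun _ => e.left_inv, fun _ => e.right_inv, hep, hfe⟩
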